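/- arXiv:2110.10961 — 9 statements merged into one kernel-verified Lean document; each statement's English description precedes it below -/
import Mathlib

section
/- Let l ≤ u be real numbers and p ∈ [0,1]. Then the supremum over c ∈ [l,u] of the regret max(c,0) − p·c equals max((1−p)·max(u,0), p·max(−l,0)). -/
/-!
The regret `max c 0 - p * c` is piecewise linear, nonincreasing for `c ≤ 0` and nondecreasing for
`c ≥ 0`. On the nonnegative part of `[l, u]` it is therefore at most its value at `u`, and on the
nonpositive part at most its value at `l`. As the regret is nonnegative, the regret at `u` is at
least `(1 - p) * max u 0` and the regret at `l` is at least `p * max (-l) 0`, so the bound is tight.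
-/

/-- For reals `l ≤ u` and `p ∈ [0,1]`, the supremum over `c ∈ [l,u]` of the regret
`max(c,0) − p·c` equals `max((1−p)·max(u,0), p·max(−l,0))`. -/
theorem stmt_0 (l u p : ℝ) (hlu : l ≤ u) (hp : p ∈ Set.Icc (0:ℝ) 1) :
    sSup ((fun c => max c 0 - p * c) '' Set.Icc l u)
      = max ((1 - p) * max u 0) (p * max (-l) 0) := by
  obtain ⟨hp0, hp1⟩ := hp
  -- The regret is `(1 - p) * c` for `c ≥ 0` and `p * (-c)` for `c ≤ 0`.
  have hub : ∀ y ∈ (fun c => max c 0 - p * c) '' Set.Icc l u,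
      y ≤ max ((1 - p) * max u 0) (p * max (-l) 0) := by
    rintro _ ⟨c, ⟨hlc, hcu⟩, rfl⟩
    dsimp only
    rcases le_total 0 c with hc | hc
    · refine le_max_of_le_left ?_
      rw [max_eq_left hc, max_eq_left (hc.trans hcu)]
      nlinarith
    · refine le_max_of_le_right ?_
      rw [max_eq_right hc, max_eq_left (by linarith : (0:ℝ) ≤ -l)]
      nlinarith
  -- Conversely, each term of the maximum is bounded by the regret at an endpoint.
  refine le_antisymm
    (csSup_le ((Set.nonempty_Icc.2 hlu).image _) hub) (max_le ?_ ?_)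
  · refine le_csSup_of_le ⟨_, hub⟩ ⟨u, ⟨hlu, le_rfl⟩, rfl⟩ ?_
    nlinarith [le_max_left u 0]
  · refine le_csSup_of_le ⟨_, hub⟩ ⟨l, ⟨le_rfl, hlu⟩, rfl⟩ ?_
    dsimp only
    rcases le_total 0 l with hl | hl
    · rw [max_eq_left hl, max_eq_right (by linarith : -l ≤ 0)]
      nlinarith
    · rw [max_eq_right hl, max_eq_left (by linarith : (0:ℝ) ≤ -l)]
      nlinarith
end

section
/- Let l ≤ u be real numbers and define p*(l,u) = 0 if u ≤ 0, p*(l,u) = 1 if l ≥ 0, and p*(l,u) = u/(u−l) if l < 0 < u. Then for every c with l ≤ c ≤ u, the regret satisfies max(c,0) − p*(l,u)·c ≤ (−l·u/(u−l)) if l < 0 < u, and max(c,0) − p*(l,u)·c ≤ 0 otherwise. -/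
open Classical in
/-- The randomized minimax rule probability: `0` if `u ≤ 0`, `1` if `l ≥ 0`,
and `u/(u−l)` if `l < 0 < u`. -/
noncomputable def pStar (l u : ℝ) : ℝ :=
  if u ≤ 0 then 0 else if 0 ≤ l then 1 else u / (u - l)

open Classical in
/-- For `l ≤ u` and any `c ∈ [l,u]`, the regret `max(c,0) − p*(l,u)·c` is at most
`−l·u/(u−l)` when `l < 0 < u`, and at most `0` otherwise. -/
theorem stmt_2 (l u : ℝ) (hlu : l ≤ u) :
    ∀ c : ℝ, l ≤ c → c ≤ u →
      max c 0 - pStar l u * c ≤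
        if l < 0 ∧ 0 < u then -l * u / (u - l) else 0 := by
  intro c hlc hcu
  unfold pStar
  by_cases hu : u ≤ 0
  · rw [if_pos hu, if_neg (fun h => absurd h.2 hu.not_gt), max_eq_right (hcu.trans hu)]
    simp
  by_cases hl : 0 ≤ l
  · rw [if_neg hu, if_pos hl, if_neg (fun h => absurd h.1 hl.not_gt), max_eq_left (hl.trans hlc)]
    simp
  rw [if_neg hu, if_neg hl, if_pos ⟨not_le.mp hl, not_le.mp hu⟩]
  push Not at hu hl
  have hd : 0 < u - l := by linarith
  -- The regret is `(-l) c / (u - l)` for `c ≥ 0` and `u (-c) / (u - l)` for `c ≤ 0`;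
  -- these are maximal at `c = u` and `c = l` respectively, with the same value.
  rw [le_div_iff₀ hd, sub_mul, mul_right_comm, div_mul_cancel₀ _ hd.ne']
  rcases le_total 0 c with hc | hc
  · rw [max_eq_left hc]
    nlinarith
  · rw [max_eq_right hc]
    nlinarith
end

section
/- Let (Ω, μ) be a probability space and let L, U, c : Ω → ℝ be measurable functions with L(x) ≤ c(x) ≤ U(x) for all x, and with L, U, c integrable. Define p*(x) = 0 if U(x) ≤ 0, p*(x) = 1 if L(x) ≥ 0, and p*(x) = U(x)/(U(x)−L(x)) if L(x) < 0 < U(x). Then the expected regret of the randomized rule that chooses action 1 with probability p*(x) satisfies ∫ (max(c(x),0) − p*(x)·c(x)) dμ(x) ≤ ∫ (−L(x)·U(x)/(U(x)−L(x)))·I{L(x)<0<U(x)} dμ(x). -/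
/-!
The inequality holds pointwise. If `U x ≤ 0` or `0 ≤ L x`, the rule is optimal at `x` and both
integrands vanish. If `L x < 0 < U x`, the regret is `c (-L) / (U - L)` for `c ≥ 0` and
`U (-c) / (U - L)` for `c ≤ 0`; both are nonnegative and at most `-L U / (U - L)`, since
`L ≤ c ≤ U`. The bound is integrable because it lies between `0` and `|U|`, and the regret is
nonnegative, so monotonicity of the integral applies.
-/

open MeasureTheory

/-- The regret at a point where the sign of the effect is not identified lies between `0` and the
minimax bound. -/
lemma regret_bounds {l u c : ℝ} (hl : l < 0) (hu : 0 < u) (hlc : l ≤ c) (hcu : c ≤ u) :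
    0 ≤ max c 0 - u / (u - l) * c ∧ max c 0 - u / (u - l) * c ≤ -l * u / (u - l) := by
  have hd : 0 < u - l := by linarith
  rcases le_total 0 c with hc | hc
  · have e : max c 0 - u / (u - l) * c = c * -l / (u - l) := by
      rw [max_eq_left hc]; field_simp; ring
    rw [e]
    exact ⟨div_nonneg (by nlinarith) hd.le, div_le_div_of_nonneg_right (by nlinarith) hd.le⟩
  · have e : max c 0 - u / (u - l) * c = u * -c / (u - l) := by
      rw [max_eq_right hc]; field_simp; ring
    rw [e]
    exact ⟨div_nonneg (by nlinarith) hd.le, div_le_div_of_nonneg_right (by nlinarith) hd.le⟩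

open Classical in
/-- Theorem 1 of the paper: on a probability space, with measurable integrable
`L ≤ c ≤ U` pointwise, the expected regret of the randomized rule choosing
action 1 with probability `p*(x) = 0` if `U x ≤ 0`, `1` if `L x ≥ 0`, and
`U x/(U x − L x)` if `L x < 0 < U x`, is bounded by
`∫ (−L·U/(U−L))·I{L<0<U} dμ`. -/
theorem stmt_3 {Ω : Type*} [MeasurableSpace Ω] (μ : Measure Ω) [IsProbabilityMeasure μ]
    (L U c : Ω → ℝ) (hLm : Measurable L) (hUm : Measurable U) (hcm : Measurable c)
    (hLc : ∀ x, L x ≤ c x) (hcU : ∀ x, c x ≤ U x)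
    (hLi : Integrable L μ) (hUi : Integrable U μ) (hci : Integrable c μ) :
    ∫ x, (max (c x) 0 -
        (if U x ≤ 0 then 0 else if 0 ≤ L x then 1 else U x / (U x - L x)) * c x) ∂μ
      ≤ ∫ x, (if L x < 0 ∧ 0 < U x then -L x * U x / (U x - L x) else 0) ∂μ := by
  have key : ∀ x,
      0 ≤ max (c x) 0 -
        (if U x ≤ 0 then 0 else if 0 ≤ L x then 1 else U x / (U x - L x)) * c x ∧
      max (c x) 0 -
        (if U x ≤ 0 then 0 else if 0 ≤ L x then 1 else U x / (U x - L x)) * c x ≤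
        (if L x < 0 ∧ 0 < U x then -L x * U x / (U x - L x) else 0) := by
    intro x
    have h1 := hLc x
    have h2 := hcU x
    by_cases hU : U x ≤ 0
    · have hc : c x ≤ 0 := h2.trans hU
      simp [hU, hU.not_gt, max_eq_right hc]
    · by_cases hL : 0 ≤ L x
      · have hc : 0 ≤ c x := hL.trans h1
        simp [hU, hL, hL.not_gt, max_eq_left hc]
      · rw [if_neg hU, if_neg hL, if_pos ⟨not_le.mp hL, not_le.mp hU⟩]
        exact regret_bounds (not_le.mp hL) (not_le.mp hU) h1 h2
  refine integral_mono_of_nonneg (.of_forall fun x => (key x).1) ?_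
    (.of_forall fun x => (key x).2)
  refine hUi.mono ?_ (.of_forall fun x => ?_)
  · refine (Measurable.ite ?_ ?_ measurable_const).aestronglyMeasurable
    · exact (measurableSet_lt hLm measurable_const).inter (measurableSet_lt measurable_const hUm)
    · exact (hLm.neg.mul hUm).div (hUm.sub hLm)
  · rw [Real.norm_of_nonneg ((key x).1.trans (key x).2)]
    split_ifs with h
    · have hd : 0 < U x - L x := by linarith [h.1, h.2]
      rw [Real.norm_of_nonneg h.2.le, div_le_iff₀ hd]
      nlinarith [h.1, h.2]
    · exact norm_nonneg _
end

section
/- Let l < 0 < u be real numbers. Then for every deterministic decision d ∈ {−1, 1}, the worst-case regret of the randomized minimax rule is strictly smaller than that of d: −l·u/(u−l) < sup over c ∈ [l,u] of (max(c,0) − c·I{d=1}). -/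
/-!
The regret of a deterministic decision is bounded below by its value at a bad endpoint: `u` for
`d = -1` (at `c = u`) and `-l` for `d = 1` (at `c = l`). The randomized value `-l * u / (u - l)` is
`u` times `-l / (u - l) < 1`, and also `-l` times `u / (u - l) < 1`, so it lies strictly below both.
-/

/-- For `l < 0 < u` and every deterministic decision `d ∈ {−1,1}`, the worst-case
regret `−l·u/(u−l)` of the randomized minimax rule is strictly smaller than the
worst-case regret `sup_{c ∈ [l,u]} (max(c,0) − c·I{d=1})` of `d`. -/
theorem stmt_6 (l u : ℝ) (hl : l < 0) (hu : 0 < u) :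
    ∀ d : ℤ, d = -1 ∨ d = 1 →
      -l * u / (u - l) <
        sSup ((fun c => max c 0 - c * (if d = 1 then (1:ℝ) else 0)) '' Set.Icc l u) := by
  intro d hd
  have hlu : 0 < u - l := by linarith
  -- The supremum is over a compact image, hence a genuine (bounded) one.
  have hbdd : BddAbove
      ((fun c => max c 0 - c * (if d = 1 then (1:ℝ) else 0)) '' Set.Icc l u) :=
    (isCompact_Icc.image (by fun_prop)).bddAbove
  rcases hd with rfl | rfl
  · -- Never treating is worst at `c = u`, with regret `u`.
    refine lt_of_lt_of_le ?_ (le_csSup hbdd ⟨u, ⟨by linarith, le_rfl⟩, rfl⟩)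
    have h : max u 0 - u * (if (-1 : ℤ) = 1 then (1:ℝ) else 0) = u := by
      simp [hu.le]
    beta_reduce
    rw [h]
    rw [div_lt_iff₀ hlu]
    nlinarith
  · -- Always treating is worst at `c = l`, with regret `-l`.
    refine lt_of_lt_of_le ?_ (le_csSup hbdd ⟨l, ⟨le_rfl, by linarith⟩, rfl⟩)
    have h : max l 0 - l * (if (1 : ℤ) = 1 then (1:ℝ) else 0) = -l := by
      simp [hl.le]
    beta_reduce
    rw [h]
    rw [div_lt_iff₀ hlu]
    nlinarith
end

section
/- Let (Ω, μ) be a probability space, and let L₋₁, U₋₁, L₁, U₁, Y₋₁, Y₁ : Ω → ℝ be measurable integrable functions with L₋₁ ≤ Y₋₁ ≤ U₋₁ and L₁ ≤ Y₁ ≤ U₁ pointwise; set L = L₁ − U₋₁ and U = U₁ − L₋₁. Let w : Ω → [0,1] be measurable and D : Ω → {−1,1} measurable. Then ∫ [(1−w)·(L·I{D=1} + L₋₁) + w·(−U·I{D=−1} + L₁)] dμ ≤ ∫ [Y₁·I{D=1} + Y₋₁·I{D=−1}] dμ. -/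
/-! The inequality holds pointwise: on `{D = 1}` the lower-bound integrand is
`L₁ - (1 - w) (U₋₁ - L₋₁) ≤ Y₁`, and on `{D = -1}` it is `L₋₁ - w (U₁ - L₁) ≤ Y₋₁`.
Both integrands are integrable, being built from integrable functions by sums and by products
with measurable `[0, 1]`-valued factors, so the integral is monotone. -/

open MeasureTheory

/-- Integrated lower-bound inequality for the value function: on a probability
space, with pointwise counterfactual mean bounds `L₋₁ ≤ Y₋₁ ≤ U₋₁`,
`L₁ ≤ Y₁ ≤ U₁`, CATE bounds `L = L₁ − U₋₁`, `U = U₁ − L₋₁`, a measurable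
weight `w : Ω → [0,1]` and a measurable decision rule `D : Ω → {−1,1}`:
`∫ [(1−w)(L·I{D=1} + L₋₁) + w(−U·I{D=−1} + L₁)] dμ
  ≤ ∫ [Y₁·I{D=1} + Y₋₁·I{D=−1}] dμ`. -/
theorem stmt_8 {Ω : Type*} [MeasurableSpace Ω] (μ : Measure Ω) [IsProbabilityMeasure μ]
    (Lm1 Um1 L1 U1 Ym1 Y1 w : Ω → ℝ) (D : Ω → ℤ)
    (hLm1 : Measurable Lm1) (hUm1 : Measurable Um1)
    (hL1 : Measurable L1) (hU1 : Measurable U1)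
    (hYm1 : Measurable Ym1) (hY1 : Measurable Y1)
    (hw : Measurable w) (hD : Measurable D)
    (hLm1i : Integrable Lm1 μ) (hUm1i : Integrable Um1 μ)
    (hL1i : Integrable L1 μ) (hU1i : Integrable U1 μ)
    (hYm1i : Integrable Ym1 μ) (hY1i : Integrable Y1 μ)
    (hbm1 : ∀ x, Lm1 x ≤ Ym1 x ∧ Ym1 x ≤ Um1 x)
    (hb1 : ∀ x, L1 x ≤ Y1 x ∧ Y1 x ≤ U1 x)
    (hwb : ∀ x, w x ∈ Set.Icc (0:ℝ) 1)
    (hDb : ∀ x, D x = -1 ∨ D x = 1) :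
    ∫ x, ((1 - w x) * ((L1 x - Um1 x) * (if D x = 1 then (1:ℝ) else 0) + Lm1 x)
        + w x * (-(U1 x - Lm1 x) * (if D x = -1 then (1:ℝ) else 0) + L1 x)) ∂μ
      ≤ ∫ x, (Y1 x * (if D x = 1 then (1:ℝ) else 0)
        + Ym1 x * (if D x = -1 then (1:ℝ) else 0)) ∂μ := by
  have hind : ∀ k : ℤ, Measurable fun x => if D x = k then (1:ℝ) else 0 := fun k =>
    Measurable.ite (hD (measurableSet_singleton k)) measurable_const measurable_const
  -- Multiplying by a measurable factor with values in `[0, 1]` preserves integrability.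
  have hmul : ∀ f g : Ω → ℝ, Integrable f μ → Measurable g → (∀ x, 0 ≤ g x ∧ g x ≤ 1) →
      Integrable (fun x => f x * g x) μ := fun f g hf hg hb =>
    hf.mul_bdd (c := 1) hg.aestronglyMeasurable
      (ae_of_all _ fun x => by rw [Real.norm_eq_abs, abs_of_nonneg (hb x).1]; exact (hb x).2)
  have hI : ∀ (k : ℤ) (f : Ω → ℝ), Integrable f μ →
      Integrable (fun x => f x * if D x = k then (1:ℝ) else 0) μ := fun k f hf =>
    hmul f _ hf (hind k) fun x => by split_ifs <;> norm_num
  refine integral_mono ?_ ((hI 1 _ hY1i).add (hI (-1) _ hYm1i)) ?_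
  · have h1 := hmul _ (fun x => 1 - w x) ((hI 1 _ (hL1i.sub hUm1i)).add hLm1i)
      (measurable_const.sub hw)
      fun x => ⟨by linarith [(hwb x).2], by linarith [(hwb x).1]⟩
    have h2 := hmul _ w ((hI (-1) _ (hU1i.sub hLm1i).neg).add hL1i) hw hwb
    refine (h1.add h2).congr (ae_of_all _ fun x => ?_)
    simp only [Pi.add_apply, Pi.sub_apply, Pi.neg_apply]
    ring
  · intro x
    obtain ⟨hw0, hw1⟩ := hwb x
    obtain ⟨ha, hb⟩ := hbm1 x
    obtain ⟨hc, hd⟩ := hb1 x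
    -- If `D = -1` the left side is `L₋₁ - w (U₁ - L₁) ≤ L₋₁ ≤ Y₋₁`;
    -- if `D = 1` it is `L₁ - (1 - w) (U₋₁ - L₋₁) ≤ L₁ ≤ Y₁`.
    rcases hDb x with h | h
    · norm_num [h]
      nlinarith [mul_nonneg hw0 (sub_nonneg.2 (hc.trans hd))]
    · norm_num [h]
      nlinarith [mul_nonneg (sub_nonneg.2 hw1) (sub_nonneg.2 (ha.trans hb))]
end

section
/- Let l₋₁ ≤ u₋₁ and l₁ ≤ u₁ be real numbers, set L = l₁ − u₋₁ and U = u₁ − l₋₁, and for d ∈ {−1,1} define P(d) = L·I{d=1} + l₋₁ and Q(d) = −U·I{d=−1} + l₁. With the preference weight w(d) = I{P(d) > Q(d)}, the lower-bound objective satisfies [(1−w(1))P(1) + w(1)Q(1)] − [(1−w(−1))P(−1) + w(−1)Q(−1)] = u₁ − u₋₁; hence the maximizing decision is d = 1 if u₁ > u₋₁ and d = −1 if u₁ < u₋₁ (the maximax utility rule). -/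
/-!
The weight `I{P > Q}` selects the smaller of `P` and `Q`, so the objective is `min (P d) (Q d)`.
The bounds `l₋₁ ≤ u₋₁` and `l₁ ≤ u₁` give `P 1 ≤ Q 1` and `Q (-1) ≤ P (-1)`, so the objective is
`l₁ - u₋₁ + l₋₁` at `d = 1` and `l₁ - u₁ + l₋₁` at `d = -1`; the difference is `u₁ - u₋₁`.
-/

/-- `P(d) = L·I{d=1} + l₋₁` with `L = l₁ − u₋₁`. -/
def P (lm1 um1 l1 u1 : ℝ) (d : ℤ) : ℝ :=
  (l1 - um1) * (if d = 1 then 1 else 0) + lm1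

/-- `Q(d) = −U·I{d=−1} + l₁` with `U = u₁ − l₋₁`. -/
def Q (lm1 um1 l1 u1 : ℝ) (d : ℤ) : ℝ :=
  -(u1 - lm1) * (if d = -1 then 1 else 0) + l1

/-- The maximax weight `w(d) = I{P(d) > Q(d)}`. -/
noncomputable def wMaximax (lm1 um1 l1 u1 : ℝ) (d : ℤ) : ℝ :=
  if P lm1 um1 l1 u1 d > Q lm1 um1 l1 u1 d then 1 else 0

/-- The lower-bound objective with weight `w`. -/
noncomputable def objMaximax (lm1 um1 l1 u1 : ℝ) (d : ℤ) : ℝ :=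
  (1 - wMaximax lm1 um1 l1 u1 d) * P lm1 um1 l1 u1 d
    + wMaximax lm1 um1 l1 u1 d * Q lm1 um1 l1 u1 d

/-- Maximax utility row of Table 1: with `w(d) = I{P(d) > Q(d)}`, the difference
of the lower-bound objective between `d = 1` and `d = −1` equals `u₁ − u₋₁`;
hence the maximizing decision is `d = 1` if `u₁ > u₋₁` and `d = −1` if `u₁ < u₋₁`. -/
theorem stmt_10 (lm1 um1 l1 u1 : ℝ) (h1 : lm1 ≤ um1) (h2 : l1 ≤ u1) :
    objMaximax lm1 um1 l1 u1 1 - objMaximax lm1 um1 l1 u1 (-1) = u1 - um1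
    ∧ (um1 < u1 → objMaximax lm1 um1 l1 u1 (-1) < objMaximax lm1 um1 l1 u1 1)
    ∧ (u1 < um1 → objMaximax lm1 um1 l1 u1 1 < objMaximax lm1 um1 l1 u1 (-1)) := by
  -- Since `P 1 ≤ Q 1`, the weight vanishes at `d = 1`, leaving `P 1`.
  have hp : objMaximax lm1 um1 l1 u1 1 = l1 - um1 + lm1 := by
    have hw : ¬ P lm1 um1 l1 u1 1 > Q lm1 um1 l1 u1 1 := by
      norm_num [P, Q]
      linarith
    rw [objMaximax, wMaximax, if_neg hw]
    norm_num [P]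
  -- Since `Q (-1) ≤ P (-1)`, the objective at `d = -1` is `Q (-1)`; when the two are
  -- equal the weight is `0`, but the value is the same.
  have hm : objMaximax lm1 um1 l1 u1 (-1) = l1 - u1 + lm1 := by
    have hP : P lm1 um1 l1 u1 (-1) = lm1 := by norm_num [P]
    have hQ : Q lm1 um1 l1 u1 (-1) = l1 - u1 + lm1 := by
      norm_num [Q]
      ring
    rw [objMaximax, wMaximax, hP, hQ]
    split_ifs with h <;> linarith
  rw [hp, hm]
  exact ⟨by ring, fun h => by linarith, fun h => by linarith⟩
end

section
/- Let l₋₁ ≤ u₋₁ and l₁ ≤ u₁ be real numbers, set L = l₁ − u₋₁ and U = u₁ − l₋₁, and for d ∈ {−1,1} define P(d) = L·I{d=1} + l₋₁ and Q(d) = −U·I{d=−1} + l₁. With the preference weight w(d) = I{P(d) < Q(d)}, the lower-bound objective satisfies [(1−w(1))P(1) + w(1)Q(1)] − [(1−w(−1))P(−1) + w(−1)Q(−1)] = l₁ − l₋₁; hence the maximizing decision is d = 1 if l₁ > l₋₁ and d = −1 if l₁ < l₋₁ (the Wald maximin utility rule). -/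
/-- The maximin weight `w(d) = I{P(d) < Q(d)}`. -/
noncomputable def wMaximin (lm1 um1 l1 u1 : ℝ) (d : ℤ) : ℝ :=
  if P lm1 um1 l1 u1 d < Q lm1 um1 l1 u1 d then 1 else 0

/-- The lower-bound objective with weight `w`. -/
noncomputable def objMaximin (lm1 um1 l1 u1 : ℝ) (d : ℤ) : ℝ :=
  (1 - wMaximin lm1 um1 l1 u1 d) * P lm1 um1 l1 u1 d
    + wMaximin lm1 um1 l1 u1 d * Q lm1 um1 l1 u1 d

/-- The maximin weight selects the larger of `P(d)` and `Q(d)`. -/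
lemma objMaximin_eq_max (lm1 um1 l1 u1 : ℝ) (d : ℤ) :
    objMaximin lm1 um1 l1 u1 d = max (P lm1 um1 l1 u1 d) (Q lm1 um1 l1 u1 d) := by
  unfold objMaximin wMaximin
  split_ifs with h
  · rw [max_eq_right h.le]; ring
  · rw [max_eq_left (not_lt.mp h)]; ring

/-- `P(1) = l₁ - (u₋₁ - l₋₁) ≤ l₁ = Q(1)`. -/
lemma objMaximin_one (lm1 um1 l1 u1 : ℝ) (h1 : lm1 ≤ um1) :
    objMaximin lm1 um1 l1 u1 1 = l1 := by
  have hP : P lm1 um1 l1 u1 1 = l1 - um1 + lm1 := by simp [P]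
  have hQ : Q lm1 um1 l1 u1 1 = l1 := by norm_num [Q]
  rw [objMaximin_eq_max, hP, hQ]
  exact max_eq_right (by linarith)

/-- `Q(-1) = l₋₁ - (u₁ - l₁) ≤ l₋₁ = P(-1)`. -/
lemma objMaximin_neg_one (lm1 um1 l1 u1 : ℝ) (h2 : l1 ≤ u1) :
    objMaximin lm1 um1 l1 u1 (-1) = lm1 := by
  have hP : P lm1 um1 l1 u1 (-1) = lm1 := by norm_num [P]
  have hQ : Q lm1 um1 l1 u1 (-1) = -(u1 - lm1) + l1 := by simp [Q]
  rw [objMaximin_eq_max, hP, hQ]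
  exact max_eq_left (by linarith)

/-- (Wald) maximin utility row of Table 1: with `w(d) = I{P(d) < Q(d)}`, the
difference of the lower-bound objective between `d = 1` and `d = −1` equals
`l₁ − l₋₁`; hence the maximizing decision is `d = 1` if `l₁ > l₋₁` and `d = −1`
if `l₁ < l₋₁`. -/
theorem stmt_11 (lm1 um1 l1 u1 : ℝ) (h1 : lm1 ≤ um1) (h2 : l1 ≤ u1) :
    objMaximin lm1 um1 l1 u1 1 - objMaximin lm1 um1 l1 u1 (-1) = l1 - lm1
    ∧ (lm1 < l1 → objMaximin lm1 um1 l1 u1 (-1) < objMaximin lm1 um1 l1 u1 1)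
    ∧ (l1 < lm1 → objMaximin lm1 um1 l1 u1 1 < objMaximin lm1 um1 l1 u1 (-1)) := by
  rw [objMaximin_one lm1 um1 l1 u1 h1, objMaximin_neg_one lm1 um1 l1 u1 h2]
  exact ⟨rfl, id, id⟩
end

section
/- Let l₋₁ ≤ u₋₁ and l₁ ≤ u₁ be real numbers, set L = l₁ − u₋₁ and U = u₁ − l₋₁, and for d ∈ {−1,1} define P(d) = L·I{d=1} + l₋₁ and Q(d) = −U·I{d=−1} + l₁. Fix α ∈ [0,1] and the preference weight w(d) = α·I{P(d) > Q(d)} + (1−α)·I{P(d) < Q(d)}. Then [(1−w(1))P(1) + w(1)Q(1)] − [(1−w(−1))P(−1) + w(−1)Q(−1)] = [(1−α)l₁ + αu₁] − [(1−α)l₋₁ + αu₋₁]; hence the maximizing decision is d = 1 if (1−α)l₁ + αu₁ > (1−α)l₋₁ + αu₋₁ and d = −1 if the reverse strict inequality holds (the Hurwicz criterion rule with index α). -/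
/-- The Hurwicz weight `w(d) = α·I{P(d) > Q(d)} + (1−α)·I{P(d) < Q(d)}`. -/
noncomputable def wHurwicz (α lm1 um1 l1 u1 : ℝ) (d : ℤ) : ℝ :=
  α * (if P lm1 um1 l1 u1 d > Q lm1 um1 l1 u1 d then 1 else 0)
    + (1 - α) * (if P lm1 um1 l1 u1 d < Q lm1 um1 l1 u1 d then 1 else 0)

/-- The lower-bound objective with the Hurwicz weight. -/
noncomputable def objHurwicz (α lm1 um1 l1 u1 : ℝ) (d : ℤ) : ℝ :=
  (1 - wHurwicz α lm1 um1 l1 u1 d) * P lm1 um1 l1 u1 d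
    + wHurwicz α lm1 um1 l1 u1 d * Q lm1 um1 l1 u1 d

theorem objHurwicz_one (α l1 u1 : ℝ) {lm1 um1 : ℝ} (h : lm1 ≤ um1) :
    objHurwicz α lm1 um1 l1 u1 1 = l1 - α * (um1 - lm1) := by
  have hP : P lm1 um1 l1 u1 1 = l1 - um1 + lm1 := by simp [P]
  have hQ : Q lm1 um1 l1 u1 1 = l1 := by norm_num [Q]
  rw [objHurwicz, wHurwicz, hP, hQ]
  rcases h.lt_or_eq with h | rfl
  · rw [if_neg (by linarith), if_pos (by linarith)]
    ring
  -- When `P 1 = Q 1` the weight vanishes, but every weight gives the same value.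
  · simp

theorem objHurwicz_neg_one (α lm1 um1 : ℝ) {l1 u1 : ℝ} (h : l1 ≤ u1) :
    objHurwicz α lm1 um1 l1 u1 (-1) = lm1 - α * (u1 - l1) := by
  have hP : P lm1 um1 l1 u1 (-1) = lm1 := by norm_num [P]
  have hQ : Q lm1 um1 l1 u1 (-1) = l1 - u1 + lm1 := by
    simp only [Q, if_true]
    ring
  rw [objHurwicz, wHurwicz, hP, hQ]
  rcases h.lt_or_eq with h | rfl
  · rw [if_pos (by linarith), if_neg (by linarith)]
    ring
  · simp

/-- Hurwicz criterion row of Table 1: with weight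
`w(d) = α·I{P(d) > Q(d)} + (1−α)·I{P(d) < Q(d)}`, the difference of the
lower-bound objective between `d = 1` and `d = −1` equals
`[(1−α)l₁ + αu₁] − [(1−α)l₋₁ + αu₋₁]`; hence the maximizing decision is `d = 1`
if `(1−α)l₁ + αu₁ > (1−α)l₋₁ + αu₋₁` and `d = −1` under the reverse strict
inequality. -/
theorem stmt_12 (lm1 um1 l1 u1 α : ℝ) (h1 : lm1 ≤ um1) (h2 : l1 ≤ u1)
    (hα : α ∈ Set.Icc (0:ℝ) 1) :
    objHurwicz α lm1 um1 l1 u1 1 - objHurwicz α lm1 um1 l1 u1 (-1)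
      = ((1 - α) * l1 + α * u1) - ((1 - α) * lm1 + α * um1)
    ∧ ((1 - α) * lm1 + α * um1 < (1 - α) * l1 + α * u1 →
        objHurwicz α lm1 um1 l1 u1 (-1) < objHurwicz α lm1 um1 l1 u1 1)
    ∧ ((1 - α) * l1 + α * u1 < (1 - α) * lm1 + α * um1 →
        objHurwicz α lm1 um1 l1 u1 1 < objHurwicz α lm1 um1 l1 u1 (-1)) := by
  have key : objHurwicz α lm1 um1 l1 u1 1 - objHurwicz α lm1 um1 l1 u1 (-1)
      = ((1 - α) * l1 + α * u1) - ((1 - α) * lm1 + α * um1) := by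
    rw [objHurwicz_one α l1 u1 h1, objHurwicz_neg_one α lm1 um1 h2]
    ring
  refine ⟨key, fun h => ?_, fun h => ?_⟩ <;> linarith
end

section
/- Let l₋₁ ≤ u₋₁ and l₁ ≤ u₁ be real numbers with l₁ ≠ l₋₁, set L = l₁ − u₋₁ and U = u₁ − l₋₁, and suppose L < 0 < U. Let d be the maximin rule: d = 1 if l₁ > l₋₁ and d = −1 if l₁ < l₋₁. Then the worst-case regret sup over c ∈ [L,U] of (max(c,0) − c·I{d=1}) equals |L| when l₋₁ < l₁, and equals |U| when l₋₁ > l₁. -/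
/-!
On `[L, U]` the regret is `max (-c) 0` when `d = 1` and `max c 0` when `d = -1`. Since `L < 0 < U`,
these attain their maxima at the endpoints `L` and `U`, with values `-L = |L|` and `U = |U|`.
-/

/-- Maximum regret of the maximin rule (Appendix B, pointwise form): with
counterfactual mean bounds `l₋₁ ≤ u₋₁`, `l₁ ≤ u₁`, `l₁ ≠ l₋₁`, CATE bounds
`L = l₁ − u₋₁ < 0 < U = u₁ − l₋₁`, and the maximin decision `d = 1` if
`l₁ > l₋₁`, `d = −1` if `l₁ < l₋₁`, the worst-case regret
`sup_{c ∈ [L,U]} (max(c,0) − c·I{d=1})` equals `|L|` when `l₋₁ < l₁` and `|U|`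
when `l₋₁ > l₁`. -/
theorem stmt_14 (lm1 um1 l1 u1 : ℝ) (d : ℤ)
    (h1 : lm1 ≤ um1) (h2 : l1 ≤ u1) (hne : l1 ≠ lm1)
    (hL : l1 - um1 < 0) (hU : 0 < u1 - lm1)
    (hd : d = if lm1 < l1 then 1 else -1) :
    (lm1 < l1 →
      sSup ((fun c => max c 0 - c * (if d = 1 then (1:ℝ) else 0)) ''
          Set.Icc (l1 - um1) (u1 - lm1))
        = |l1 - um1|)
    ∧ (l1 < lm1 →
      sSup ((fun c => max c 0 - c * (if d = 1 then (1:ℝ) else 0)) ''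
          Set.Icc (l1 - um1) (u1 - lm1))
        = |u1 - lm1|) := by
  constructor
  · intro h
    have hd1 : d = 1 := by rw [hd, if_pos h]
    rw [if_pos hd1, abs_of_neg hL]
    -- The regret of `d = 1` is `max (-c) 0`, maximal at the left endpoint.
    apply IsGreatest.csSup_eq
    refine ⟨⟨l1 - um1, ⟨le_rfl, by linarith⟩, ?_⟩, ?_⟩
    · simp only [max_eq_right hL.le]
      ring
    · rintro _ ⟨c, ⟨hc1, hc2⟩, rfl⟩
      rcases max_cases c 0 with ⟨hm, _⟩ | ⟨hm, _⟩ <;> simp only [hm] <;> linarith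
  · intro h
    have hd1 : d ≠ 1 := by
      rw [hd, if_neg h.not_gt]
      norm_num
    rw [if_neg hd1, abs_of_pos hU]
    -- The regret of `d = -1` is `max c 0`, maximal at the right endpoint.
    apply IsGreatest.csSup_eq
    refine ⟨⟨u1 - lm1, ⟨by linarith, le_rfl⟩, ?_⟩, ?_⟩
    · simp only [max_eq_left hU.le]
      ring
    · rintro _ ⟨c, ⟨hc1, hc2⟩, rfl⟩
      rcases max_cases c 0 with ⟨hm, _⟩ | ⟨hm, _⟩ <;> simp only [hm] <;> linarith
end
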